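/- arXiv:2502.05412 — 4 statements merged into one kernel-verified Lean document; each statement's English description precedes it below -/
import Mathlib

section
/- Let 𝒜 = (A_1,…,A_m) be an m-tuple of n×n complex matrices. The following are equivalent: (1) 𝒜 is scalable, i.e., for every ε > 0 there exist g,h ∈ GL(n,ℂ) such that ‖T_{gᴴ𝒜h}(I) − I‖₂² + ‖T*_{gᴴ𝒜h}(I) − I‖₂² < ε², where ‖·‖₂ is the Frobenius norm; (2) the infimum over positive definite Hermitian n×n matrices X of det(Σ_{k=1}^m A_k X A_kᴴ)/det X is strictly positive; (3) for every positive semidefinite Hermitian n×n matrix X, rank(T_𝒜(X)) ≥ rank(X). -/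
noncomputable section
open scoped Classical
open Matrix
open scoped ComplexOrder

/-- The completely positive operator `T_𝒜(X) = ∑ k, A k * X * (A k)ᴴ`. -/
def Tcp {m n : ℕ} (A : Fin m → Matrix (Fin n) (Fin n) ℂ)
    (X : Matrix (Fin n) (Fin n) ℂ) : Matrix (Fin n) (Fin n) ℂ :=
  ∑ k, A k * X * (A k)ᴴ

/-- The dual operator `T*_𝒜(X) = ∑ k, (A k)ᴴ * X * A k`. -/
def TcpStar {m n : ℕ} (A : Fin m → Matrix (Fin n) (Fin n) ℂ)
    (X : Matrix (Fin n) (Fin n) ℂ) : Matrix (Fin n) (Fin n) ℂ :=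
  ∑ k, (A k)ᴴ * X * A k

/-- Squared Frobenius norm of a complex matrix. -/
def frobSq {n : ℕ} (X : Matrix (Fin n) (Fin n) ℂ) : ℝ :=
  ∑ i, ∑ j, ‖X i j‖ ^ 2

def spec {n : ℕ} (U : Matrix (Fin n) (Fin n) ℂ) (d : Fin n → ℝ) : Matrix (Fin n) (Fin n) ℂ :=
  U * diagonal (fun i => (d i : ℂ)) * Uᴴ

lemma exists_spec {n : ℕ} {X : Matrix (Fin n) (Fin n) ℂ} (hX : X.IsHermitian) :
    ∃ U : Matrix (Fin n) (Fin n) ℂ, ∃ d : Fin n → ℝ, U * Uᴴ = 1 ∧ Uᴴ * U = 1 ∧ X = spec U d ∧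
      d = hX.eigenvalues := by
  refine ⟨hX.eigenvectorUnitary, hX.eigenvalues, ?_, ?_, ?_, rfl⟩
  · exact Unitary.coe_mul_star_self hX.eigenvectorUnitary
  · exact Unitary.coe_star_mul_self hX.eigenvectorUnitary
  · exact hX.spectral_theorem

lemma exists_spec_psd {n : ℕ} {X : Matrix (Fin n) (Fin n) ℂ} (hX : X.PosSemidef) :
    ∃ U : Matrix (Fin n) (Fin n) ℂ, ∃ d : Fin n → ℝ, U * Uᴴ = 1 ∧ Uᴴ * U = 1 ∧ X = spec U d ∧
      ∀ i, 0 ≤ d i := by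
  obtain ⟨U, d, h1, h2, h3, rfl⟩ := exists_spec hX.1
  exact ⟨U, _, h1, h2, h3, hX.eigenvalues_nonneg⟩

lemma exists_spec_pd {n : ℕ} {X : Matrix (Fin n) (Fin n) ℂ} (hX : X.PosDef) :
    ∃ U : Matrix (Fin n) (Fin n) ℂ, ∃ d : Fin n → ℝ, U * Uᴴ = 1 ∧ Uᴴ * U = 1 ∧ X = spec U d ∧
      ∀ i, 0 < d i := by
  obtain ⟨U, d, h1, h2, h3, rfl⟩ := exists_spec hX.1
  exact ⟨U, _, h1, h2, h3, hX.eigenvalues_pos⟩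

lemma spec_psd {n : ℕ} (U : Matrix (Fin n) (Fin n) ℂ) {d : Fin n → ℝ} (hd : ∀ i, 0 ≤ d i) :
    (spec U d).PosSemidef := by
  apply PosSemidef.mul_mul_conjTranspose_same
  apply PosSemidef.diagonal
  intro i
  simpa using hd i

lemma spec_sub {n : ℕ} (U : Matrix (Fin n) (Fin n) ℂ) (d e : Fin n → ℝ) :
    spec U d - spec U e = spec U (fun i => d i - e i) := by
  unfold spec
  rw [← Matrix.sub_mul, ← Matrix.mul_sub, diagonal_sub]
  simp

lemma spec_smul {n : ℕ} (U : Matrix (Fin n) (Fin n) ℂ) (c : ℝ) (d : Fin n → ℝ) :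
    (c : ℂ) • spec U d = spec U (fun i => c * d i) := by
  unfold spec
  rw [← Matrix.smul_mul, ← Matrix.mul_smul, ← diagonal_smul]
  congr 3
  ext i; simp

lemma spec_one {n : ℕ} {U : Matrix (Fin n) (Fin n) ℂ} (hU : U * Uᴴ = 1) :
    spec U (fun _ => 1) = 1 := by
  simp [spec, hU]

lemma spec_mul {n : ℕ} {U : Matrix (Fin n) (Fin n) ℂ} (hU : Uᴴ * U = 1) (d e : Fin n → ℝ) :
    spec U d * spec U e = spec U (fun i => d i * e i) := by
  unfold spec
  have : U * diagonal (fun i => (d i : ℂ)) * Uᴴ * (U * diagonal (fun i => (e i : ℂ)) * Uᴴ)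
    = U * diagonal (fun i => (d i : ℂ)) * (Uᴴ * U) * diagonal (fun i => (e i : ℂ)) * Uᴴ := by
    simp only [Matrix.mul_assoc]
  rw [this, hU, Matrix.mul_one, Matrix.mul_assoc U, diagonal_mul_diagonal]
  simp

lemma spec_trace {n : ℕ} {U : Matrix (Fin n) (Fin n) ℂ} (hU : Uᴴ * U = 1) (d : Fin n → ℝ) :
    (spec U d).trace = ((∑ i, d i : ℝ) : ℂ) := by
  unfold spec
  rw [trace_mul_cycle, hU, Matrix.one_mul, trace_diagonal]
  simp

lemma spec_det {n : ℕ} {U : Matrix (Fin n) (Fin n) ℂ} (hU : Uᴴ * U = 1) (d : Fin n → ℝ) :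
    (spec U d).det = ((∏ i, d i : ℝ) : ℂ) := by
  unfold spec
  have : (Uᴴ).det * U.det = 1 := by rw [← det_mul, hU, det_one]
  rw [det_mul, det_mul, det_diagonal, mul_right_comm, mul_comm U.det, this, one_mul]
  simp

lemma spec_pd {n : ℕ} {U : Matrix (Fin n) (Fin n) ℂ} (hU : U * Uᴴ = 1) {d : Fin n → ℝ}
    (hd : ∀ i, 0 < d i) : (spec U d).PosDef := by
  apply PosDef.mul_mul_conjTranspose_same
  · apply PosDef.diagonal
    intro i
    simpa using hd i
  · intro x y h
    have := congrArg (fun z => z ᵥ* Uᴴ) h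
    simpa [vecMul_vecMul, hU] using this

lemma isUnit_det_of_mul {n : ℕ} {U V : Matrix (Fin n) (Fin n) ℂ} (h : U * V = 1) :
    IsUnit U.det := by
  apply IsUnit.of_mul_eq_one V.det
  rw [← det_mul, h, det_one]

lemma spec_rank {n : ℕ} {U : Matrix (Fin n) (Fin n) ℂ} (hU : U * Uᴴ = 1) (hU' : Uᴴ * U = 1)
    (d : Fin n → ℝ) :
    (spec U d).rank = (Finset.univ.filter (fun i => d i ≠ 0)).card := by
  unfold spec
  rw [rank_mul_eq_left_of_isUnit_det _ _ (isUnit_det_of_mul hU'),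
    rank_mul_eq_right_of_isUnit_det _ _ (isUnit_det_of_mul hU), rank_diagonal,
    Fintype.card_subtype]
  congr 1
  ext i; simp

lemma psd_factor {n : ℕ} {X : Matrix (Fin n) (Fin n) ℂ} (hX : X.PosSemidef) :
    ∃ h : Matrix (Fin n) (Fin n) ℂ, X = h * hᴴ := by
  obtain ⟨U, d, h1, h2, rfl, hd⟩ := exists_spec_psd hX
  refine ⟨U * diagonal (fun i => ((Real.sqrt (d i) : ℝ) : ℂ)), ?_⟩
  unfold spec
  rw [conjTranspose_mul, diagonal_conjTranspose, ← Matrix.mul_assoc,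
    Matrix.mul_assoc U (diagonal _) (diagonal _),
    diagonal_mul_diagonal]
  congr 3
  ext i
  simp only [Pi.star_apply, RCLike.star_def, Complex.conj_ofReal]
  rw [← Complex.ofReal_mul, Real.mul_self_sqrt (hd i)]

lemma trace_mul_nonneg {n : ℕ} {X Y : Matrix (Fin n) (Fin n) ℂ} (hX : X.PosSemidef)
    (hY : Y.PosSemidef) : 0 ≤ (X * Y).trace := by
  obtain ⟨h, rfl⟩ := psd_factor hX
  have := (hY.conjTranspose_mul_mul_same h).trace_nonneg
  rwa [Matrix.mul_assoc, Matrix.trace_mul_comm, Matrix.mul_assoc, Matrix.trace_mul_comm] at this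

lemma mul_eq_zero_of_trace {n : ℕ} {X Y : Matrix (Fin n) (Fin n) ℂ} (hX : X.PosSemidef)
    (hY : Y.PosSemidef) (h0 : (X * Y).trace = 0) : X * Y = 0 := by
  obtain ⟨h, rfl⟩ := psd_factor hX
  obtain ⟨l, rfl⟩ := psd_factor hY
  have : ((hᴴ * l) * (hᴴ * l)ᴴ).trace = 0 := by
    rw [← h0, conjTranspose_mul, conjTranspose_conjTranspose, Matrix.mul_assoc h, 
      Matrix.trace_mul_comm h]
    simp only [Matrix.mul_assoc]
  rw [trace_mul_conjTranspose_self_eq_zero_iff] at this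
  rw [Matrix.mul_assoc, ← Matrix.mul_assoc hᴴ, this]
  simp

lemma frobSq_eq {n : ℕ} (X : Matrix (Fin n) (Fin n) ℂ) : ((frobSq X : ℝ) : ℂ) = (X * Xᴴ).trace := by
  unfold frobSq
  simp only [trace, diag_apply, mul_apply, conjTranspose_apply, Complex.ofReal_sum]
  refine Finset.sum_congr rfl fun i _ => Finset.sum_congr rfl fun j _ => ?_
  rw [RCLike.star_def, Complex.mul_conj, Complex.normSq_eq_norm_sq]

lemma frobSq_spec {n : ℕ} {U : Matrix (Fin n) (Fin n) ℂ} (hU' : Uᴴ * U = 1)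
    (d : Fin n → ℝ) : frobSq (spec U d) = ∑ i, d i ^ 2 := by
  have : ((frobSq (spec U d) : ℝ) : ℂ) = ((∑ i, d i ^ 2 : ℝ) : ℂ) := by
    rw [frobSq_eq]
    have h : (spec U d)ᴴ = spec U d := by
      unfold spec
      simp only [conjTranspose_mul, conjTranspose_conjTranspose, diagonal_conjTranspose, 
        Matrix.mul_assoc]
      congr 3
      ext i
      simp
    rw [h, spec_mul hU', spec_trace hU']
    simp [sq]
  exact_mod_cast this

lemma Tcp_psd {m n : ℕ} (A : Fin m → Matrix (Fin n) (Fin n) ℂ) {X : Matrix (Fin n) (Fin n) ℂ}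
    (hX : X.PosSemidef) : (Tcp A X).PosSemidef :=
  posSemidef_sum _ fun _ _ => hX.mul_mul_conjTranspose_same _

lemma TcpStar_psd {m n : ℕ} (A : Fin m → Matrix (Fin n) (Fin n) ℂ) {X : Matrix (Fin n) (Fin n) ℂ}
    (hX : X.PosSemidef) : (TcpStar A X).PosSemidef :=
  posSemidef_sum _ fun _ _ => hX.conjTranspose_mul_mul_same _

lemma Tcp_sub {m n : ℕ} (A : Fin m → Matrix (Fin n) (Fin n) ℂ) (X Y : Matrix (Fin n) (Fin n) ℂ) :
    Tcp A X - Tcp A Y = Tcp A (X - Y) := by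
  simp [Tcp, Matrix.mul_sub, Matrix.sub_mul]

lemma Tcp_smul {m n : ℕ} (A : Fin m → Matrix (Fin n) (Fin n) ℂ) (c : ℂ)
    (X : Matrix (Fin n) (Fin n) ℂ) :
    Tcp A (c • X) = c • Tcp A X := by
  simp [Tcp, Finset.smul_sum]

lemma Tcp_trace {m n : ℕ} (A : Fin m → Matrix (Fin n) (Fin n) ℂ) (X Y : Matrix (Fin n) (Fin n) ℂ) :
    (Y * Tcp A X).trace = (TcpStar A Y * X).trace := by
  simp only [Tcp, TcpStar, Matrix.mul_sum, Matrix.sum_mul, trace_sum]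
  refine Finset.sum_congr rfl fun k _ => ?_
  rw [← Matrix.mul_assoc, ← Matrix.mul_assoc, Matrix.trace_mul_comm]
  simp only [Matrix.mul_assoc]

lemma Tcp_conj {m n : ℕ} (A : Fin m → Matrix (Fin n) (Fin n) ℂ) (g h X : Matrix (Fin n) (Fin n) ℂ) :
    Tcp (fun k => gᴴ * A k * h) X = gᴴ * Tcp A (h * X * hᴴ) * g := by
  simp [Tcp, Matrix.mul_sum, Matrix.sum_mul, Matrix.mul_assoc]
def ind {n : ℕ} (S : Finset (Fin n)) (i : Fin n) : ℝ := if i ∈ S then 1 else 0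

lemma ind_nonneg {n : ℕ} (S : Finset (Fin n)) (i : Fin n) : 0 ≤ ind S i := by
  unfold ind; split_ifs <;> norm_num

lemma ind_le {n : ℕ} (S : Finset (Fin n)) (i : Fin n) : ind S i ≤ 1 := by
  unfold ind; split_ifs <;> norm_num

lemma sum_ind {n : ℕ} (S : Finset (Fin n)) : ∑ i, ind S i = S.card := by
  simp [ind]

lemma rank_ind {n : ℕ} {U : Matrix (Fin n) (Fin n) ℂ} (hU : U * Uᴴ = 1) (hU' : Uᴴ * U = 1)
    (S : Finset (Fin n)) : (spec U (ind S)).rank = S.card := by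
  rw [spec_rank hU hU']
  congr 1
  ext i
  simp [ind]

lemma herm_bound {n : ℕ} {W : Matrix (Fin n) (Fin n) ℂ} (hW : W.IsHermitian) {ε : ℝ} (hε : 0 < ε)
    (h : frobSq W < ε ^ 2) :
    (((ε : ℝ) : ℂ) • (1 : Matrix (Fin n) (Fin n) ℂ) - W).PosSemidef ∧
    (W - ((-ε : ℝ) : ℂ) • (1 : Matrix (Fin n) (Fin n) ℂ)).PosSemidef := by
  obtain ⟨U, d, h1, h2, rfl, -⟩ := exists_spec hW
  rw [frobSq_spec h2] at h
  have hd : ∀ i, |d i| ≤ ε := by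
    intro i
    apply abs_le_of_sq_le_sq _ hε.le
    exact (Finset.single_le_sum (f := fun i => d i ^ 2) (fun j _ => sq_nonneg _)
      (Finset.mem_univ i)).trans h.le
  rw [← spec_one h1, spec_smul, spec_smul, spec_sub, spec_sub]
  constructor <;> apply spec_psd <;> intro i <;> have := abs_le.1 (hd i) <;> linarith

lemma frobSq_nonneg {n : ℕ} (X : Matrix (Fin n) (Fin n) ℂ) : 0 ≤ frobSq X := by
  unfold frobSq; positivity

lemma trace_mono {n : ℕ} {K X Y : Matrix (Fin n) (Fin n) ℂ} (hK : K.PosSemidef)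
    (h : (Y - X).PosSemidef) : (K * X).trace.re ≤ (K * Y).trace.re := by
  have := trace_mul_nonneg hK h
  rw [Matrix.mul_sub, trace_sub] at this
  have := (Complex.le_def.1 this).1
  simp at this
  linarith

lemma rank_core {m n : ℕ} (B : Fin m → Matrix (Fin n) (Fin n) ℂ) 
    (hB : frobSq (Tcp B 1 - 1) + frobSq (TcpStar B 1 - 1) < (1 / (2 * (n : ℝ) + 1)) ^ 2)
    {Y : Matrix (Fin n) (Fin n) ℂ} (hY : Y.PosSemidef) : Y.rank ≤ (Tcp B Y).rank := by
  set ε : ℝ := 1 / (2 * (n : ℝ) + 1) with hεdef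
  have hε : 0 < ε := by positivity
  have hT := (herm_bound (W := Tcp B 1 - 1) 
    ((Tcp_psd B PosSemidef.one).1.sub isHermitian_one) hε 
    (by have := frobSq_nonneg (TcpStar B 1 - 1); linarith)).1
  have hS := (herm_bound (W := TcpStar B 1 - 1) 
    ((TcpStar_psd B PosSemidef.one).1.sub isHermitian_one) hε 
    (by have := frobSq_nonneg (Tcp B 1 - 1); linarith)).2
  obtain ⟨V, t, hV, hV', hTY, ht⟩ := exists_spec_psd (Tcp_psd B hY)
  obtain ⟨U, y, hU, hU', rfl, hy⟩ := exists_spec_psd hY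
  set S := Finset.univ.filter (fun i => y i ≠ 0) with hSdef
  set S' := Finset.univ.filter (fun i => t i ≠ 0) with hS'def
  rw [hTY, spec_rank hU hU', spec_rank hV hV', ← hSdef, ← hS'def]
  -- a constant dominating the projection
  obtain ⟨c, hc⟩ : ∃ c : ℝ, ∀ i, ind S i ≤ c * y i := by
    refine ⟨∑ i, (y i)⁻¹, fun i => ?_⟩
    have h1 : (y i)⁻¹ ≤ ∑ i, (y i)⁻¹ := 
      Finset.single_le_sum (f := fun i => (y i)⁻¹) (fun j _ => inv_nonneg.2 (hy j))
        (Finset.mem_univ i)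
    by_cases h : y i = 0
    · simp [ind, hSdef, h]
    · have : ind S i = (y i)⁻¹ * y i := by simp [ind, hSdef, h]
      rw [this]
      exact mul_le_mul_of_nonneg_right h1 (hy i)
  set P := spec U (ind S) with hP
  have hPpsd : P.PosSemidef := spec_psd _ (ind_nonneg S)
  have h0 : (spec V (fun i => 1 - ind S' i) * Tcp B P).trace.re ≤ 0 := by
    refine (trace_mono (Y := Tcp B ((c : ℂ) • spec U y)) ?_ ?_).trans ?_
    · exact spec_psd _ fun i => by linarith [ind_le S' i]
    · rw [Tcp_sub]
      apply Tcp_psd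
      rw [spec_smul, hP, spec_sub]
      exact spec_psd _ fun i => by linarith [hc i]
    · rw [Tcp_smul, hTY, spec_smul, spec_mul hV', spec_trace hV', Complex.ofReal_re]
      apply le_of_eq
      apply Finset.sum_eq_zero
      intro i _
      by_cases h : t i = 0
      · simp [h]
      · simp [ind, hS'def, h]
  have h1 : (spec V (ind S') * Tcp B P).trace.re ≤ (spec V (ind S') * Tcp B 1).trace.re := by
    apply trace_mono (spec_psd _ (ind_nonneg S'))
    rw [Tcp_sub]
    apply Tcp_psd
    rw [← spec_one hU, hP, spec_sub]
    exact spec_psd _ fun i => by linarith [ind_le S i]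
  have h2 : (Tcp B P).trace.re = (spec V (fun i => 1 - ind S' i) * Tcp B P).trace.re 
      + (spec V (ind S') * Tcp B P).trace.re := by
    rw [← spec_sub V (fun _ => 1), spec_one hV, Matrix.sub_mul, trace_sub, Matrix.one_mul]
    simp
  have h3 : (spec V (ind S') * Tcp B 1).trace.re ≤ (1 + ε) * S'.card := by
    have := trace_mono (K := spec V (ind S')) (X := Tcp B 1) 
      (Y := ((1 + ε : ℝ) : ℂ) • (1 : Matrix (Fin n) (Fin n) ℂ)) (spec_psd _ (ind_nonneg S')) 
      (by convert hT using 1; push_cast; rw [add_smul, one_smul]; abel)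
    refine this.trans (le_of_eq ?_)
    rw [Matrix.mul_smul, Matrix.mul_one, trace_smul, spec_trace hV', sum_ind, smul_eq_mul, 
      ← Complex.ofReal_mul, Complex.ofReal_re]
  have h4 : (1 - ε) * S.card ≤ (Tcp B P).trace.re := by
    have := trace_mono (K := P) (Y := TcpStar B 1) 
      (X := ((1 - ε : ℝ) : ℂ) • (1 : Matrix (Fin n) (Fin n) ℂ)) hPpsd
      (by convert hS using 1; push_cast; rw [sub_smul, one_smul, neg_smul]; abel)
    rw [Matrix.trace_mul_comm P (TcpStar B 1), ← Tcp_trace, Matrix.one_mul] at this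
    refine le_trans (le_of_eq ?_) this
    rw [Matrix.mul_smul, Matrix.mul_one, trace_smul, spec_trace hU', sum_ind, smul_eq_mul, 
      ← Complex.ofReal_mul, Complex.ofReal_re]
  have h5 : (1 - ε) * S.card ≤ (1 + ε) * S'.card := by linarith
  by_contra hlt
  push Not at hlt
  have h6 : (S'.card : ℝ) + 1 ≤ S.card := by exact_mod_cast hlt
  have h7 : (S.card : ℝ) ≤ n := by
    have := Finset.card_le_univ S
    rw [Fintype.card_fin] at this
    exact_mod_cast this
  have h8 : ε * (2 * n + 1) = 1 := by rw [hεdef]; field_simp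
  nlinarith

lemma one_imp_three {m n : ℕ} (A : Fin m → Matrix (Fin n) (Fin n) ℂ)
    (h : ∀ ε > (0 : ℝ), ∃ g h : GL (Fin n) ℂ,
          frobSq (Tcp (fun k => (↑g)ᴴ * A k * (↑h : Matrix (Fin n) (Fin n) ℂ)) 1 - 1)
            + frobSq (TcpStar (fun k => (↑g)ᴴ * A k * (↑h : Matrix (Fin n) (Fin n) ℂ)) 1 - 1)
            < ε ^ 2) (X : Matrix (Fin n) (Fin n) ℂ) (hX : X.PosSemidef) :
    X.rank ≤ (Tcp A X).rank := by
  obtain ⟨g, h, hgh⟩ := h (1 / (2 * (n : ℝ) + 1)) (by positivity)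
  set h' : Matrix (Fin n) (Fin n) ℂ := ((h⁻¹ : GL (Fin n) ℂ) : Matrix (Fin n) (Fin n) ℂ) with hh'
  have e1 : (h : Matrix (Fin n) (Fin n) ℂ) * h' = 1 := by rw [hh', ← Units.val_mul]; simp
  have e2 : h' * (h : Matrix (Fin n) (Fin n) ℂ) = 1 := by rw [hh', ← Units.val_mul]; simp
  have e3 : h'ᴴ * (h : Matrix (Fin n) (Fin n) ℂ)ᴴ = 1 := by
    rw [← conjTranspose_mul, e1, conjTranspose_one]
  have e4 : (h : Matrix (Fin n) (Fin n) ℂ)ᴴ * h'ᴴ = 1 := by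
    rw [← conjTranspose_mul, e2, conjTranspose_one]
  have key := rank_core _ hgh (hX.mul_mul_conjTranspose_same h')
  rw [Tcp_conj] at key
  have e5 : (h : Matrix (Fin n) (Fin n) ℂ) * (h' * X * h'ᴴ) * (h : Matrix (Fin n) (Fin n) ℂ)ᴴ = X := by
    rw [← Matrix.mul_assoc, ← Matrix.mul_assoc, e1, Matrix.one_mul, Matrix.mul_assoc, e3, 
      Matrix.mul_one]
  have hg : IsUnit (g : Matrix (Fin n) (Fin n) ℂ).det := (isUnit_iff_isUnit_det _).1 g.isUnit
  rw [e5, rank_mul_eq_left_of_isUnit_det _ _ (isUnit_det_of_mul e3),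
    rank_mul_eq_right_of_isUnit_det _ _ (isUnit_det_of_mul e2),
    rank_mul_eq_left_of_isUnit_det _ _ hg,
    rank_mul_eq_right_of_isUnit_det _ _ (by rw [det_conjTranspose]; exact hg.star)] at key
  exact key

lemma isCompact_unitary (n : ℕ) : IsCompact {U : Matrix (Fin n) (Fin n) ℂ | U * Uᴴ = 1} := by
  have hK : IsCompact (Set.univ.pi fun _ : Fin n => Set.univ.pi fun _ : Fin n => 
      Metric.closedBall (0 : ℂ) 1) :=
    isCompact_univ_pi fun i => isCompact_univ_pi fun j => isCompact_closedBall (0 : ℂ) 1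
  have hcl : IsClosed {U : Matrix (Fin n) (Fin n) ℂ | U * Uᴴ = 1} := 
    isClosed_eq (by fun_prop) continuous_const
  refine IsCompact.of_isClosed_subset hK hcl ?_
  intro U hU i _ j _
  rw [mem_closedBall_zero_iff]
  exact entry_norm_bound_of_unitary (mem_unitaryGroup_iff.2 hU) i j

lemma phi_bound {m n : ℕ} (A : Fin m → Matrix (Fin n) (Fin n) ℂ)
    (h3 : ∀ X : Matrix (Fin n) (Fin n) ℂ, X.PosSemidef → X.rank ≤ (Tcp A X).rank)
    (S S' : Finset (Fin n)) (hS : n < S.card + S'.card) :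
    ∃ c > (0 : ℝ), ∀ U V : Matrix (Fin n) (Fin n) ℂ, U * Uᴴ = 1 → V * Vᴴ = 1 →
      c ≤ (spec V (ind S') * Tcp A (spec U (ind S))).trace.re := by
  have hc := (isCompact_unitary n).prod (isCompact_unitary n)
  have hcont : Continuous fun p : Matrix (Fin n) (Fin n) ℂ × Matrix (Fin n) (Fin n) ℂ =>
      (spec p.2 (ind S') * Tcp A (spec p.1 (ind S))).trace.re := by
    unfold spec Tcp
    fun_prop
  obtain ⟨⟨U0, V0⟩, ⟨hU0, hV0⟩, hmin⟩ := hc.exists_isMinOn ⟨(1, 1), by simp⟩ hcont.continuousOn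
  refine ⟨_, ?_, fun U V hU hV => hmin (a := (U, V)) ⟨hU, hV⟩⟩
  simp only [Set.mem_ofPred_eq] at hU0 hV0
  have hU0' := mul_eq_one_comm.1 hU0
  have hV0' := mul_eq_one_comm.1 hV0
  have p1 : (spec V0 (ind S')).PosSemidef := spec_psd _ (ind_nonneg S')
  have p2 : (spec U0 (ind S)).PosSemidef := spec_psd _ (ind_nonneg S)
  have p3 := trace_mul_nonneg p1 (Tcp_psd A p2)
  have p4 := Complex.le_def.1 p3
  rcases lt_or_eq_of_le p4.1 with h | h
  · exact h
  · exfalso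
    have h0 : (spec V0 (ind S') * Tcp A (spec U0 (ind S))).trace = 0 :=
      (Complex.ext h p4.2).symm
    have h1 := rank_add_rank_le_card_of_mul_eq_zero (mul_eq_zero_of_trace p1 (Tcp_psd A p2) h0)
    have h2 := h3 _ p2
    rw [rank_ind hU0 hU0'] at h2
    rw [rank_ind hV0 hV0', Fintype.card_fin] at h1
    omega

lemma phi_bound' {m n : ℕ} (A : Fin m → Matrix (Fin n) (Fin n) ℂ)
    (h3 : ∀ X : Matrix (Fin n) (Fin n) ℂ, X.PosSemidef → X.rank ≤ (Tcp A X).rank) :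
    ∃ c > (0 : ℝ), ∀ S S' : Finset (Fin n), n < S.card + S'.card → 
      ∀ U V : Matrix (Fin n) (Fin n) ℂ, U * Uᴴ = 1 → V * Vᴴ = 1 →
      c ≤ (spec V (ind S') * Tcp A (spec U (ind S))).trace.re := by
  have : ∀ p : Finset (Fin n) × Finset (Fin n), ∃ c > (0 : ℝ), n < p.1.card + p.2.card →
      ∀ U V : Matrix (Fin n) (Fin n) ℂ, U * Uᴴ = 1 → V * Vᴴ = 1 →
      c ≤ (spec V (ind p.2) * Tcp A (spec U (ind p.1))).trace.re := by
    intro p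
    by_cases h : n < p.1.card + p.2.card
    · obtain ⟨c, hc, h'⟩ := phi_bound A h3 p.1 p.2 h
      exact ⟨c, hc, fun _ => h'⟩
    · exact ⟨1, one_pos, fun h' => absurd h' h⟩
  choose c hc hc' using this
  obtain ⟨p0, hp0⟩ := Finite.exists_min c
  exact ⟨c p0, hc p0, fun S S' h U V hU hV => (hp0 (S, S')).trans (hc' (S, S') h U V hU hV)⟩

lemma three_imp_two {m n : ℕ} (A : Fin m → Matrix (Fin n) (Fin n) ℂ)
    (h3 : ∀ X : Matrix (Fin n) (Fin n) ℂ, X.PosSemidef → X.rank ≤ (Tcp A X).rank) :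
    0 < sInf {r : ℝ | ∃ X : Matrix (Fin n) (Fin n) ℂ, X.PosDef ∧
            r = ((Tcp A X).det / X.det).re} := by
  obtain ⟨c, hc, hb⟩ := phi_bound' A h3
  have hpos : 0 < (c / (n + 1)) ^ n := by positivity
  refine lt_of_lt_of_le hpos (le_csInf ⟨_, 1, PosDef.one, rfl⟩ ?_)
  rintro r ⟨X, hX, rfl⟩
  obtain ⟨V, μ, hV, hV', hTX, hμ⟩ := exists_spec_psd (Tcp_psd A hX.posSemidef)
  obtain ⟨U, γ, hU, hU', rfl, hγ⟩ := exists_spec_pd hX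
  rw [hTX, spec_det hU', spec_det hV', ← Complex.ofReal_div, Complex.ofReal_re, 
    le_div_iff₀ (Finset.prod_pos fun i _ => hγ i)]
  set σ := Tuple.sort γ
  set τ := Tuple.sort μ
  have hσ : Monotone (γ ∘ σ) := Tuple.monotone_sort γ
  have hτ : Monotone (μ ∘ τ) := Tuple.monotone_sort μ
  rw [← Equiv.prod_comp σ γ, ← Equiv.prod_comp τ μ]
  have : (c / (n + 1)) ^ n = ∏ _i : Fin n, (c / ((n : ℝ) + 1)) := by
    rw [Finset.prod_const]; simp only [Finset.card_univ, Fintype.card_fin]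
  rw [this, ← Finset.prod_mul_distrib]
  refine Finset.prod_le_prod (fun k _ => ?_) (fun k _ => ?_)
  · have := (hγ (σ k)).le
    positivity
  set S := (Finset.Ici k).map σ.toEmbedding with hSdef
  set S' := (Finset.Iic k).map τ.toEmbedding with hS'def
  have hcard : n < S.card + S'.card := by
    rw [hSdef, hS'def, Finset.card_map, Finset.card_map, Fin.card_Ici, Fin.card_Iic]
    have := k.2
    omega
  have h1 := hb S S' hcard U V hU hV
  have h2 : (spec V (ind S') * Tcp A ((γ (σ k) : ℂ) • spec U (ind S))).trace.re ≤ 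
      (spec V (ind S') * Tcp A (spec U γ)).trace.re := by
    apply trace_mono (spec_psd _ (ind_nonneg S'))
    rw [Tcp_sub, spec_smul, spec_sub]
    apply Tcp_psd
    apply spec_psd
    intro i
    by_cases hi : i ∈ S
    · simp only [ind, hi, if_true, mul_one]
      rw [hSdef, Finset.mem_map] at hi
      obtain ⟨j, hj, rfl⟩ := hi
      have := hσ (Finset.mem_Ici.1 hj)
      simp at this ⊢
      exact this
    · simp only [ind, hi, if_false, mul_zero, sub_zero]
      exact (hγ i).le
  rw [hTX, spec_mul hV', spec_trace hV', Tcp_smul, Matrix.mul_smul, trace_smul, smul_eq_mul, 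
    Complex.re_ofReal_mul, Complex.ofReal_re] at h2
  have h4 : ∑ i, ind S' i * μ i ≤ (n + 1) * μ (τ k) := by
    have : ∑ i, ind S' i * μ i ≤ ∑ _i : Fin n, μ (τ k) := by
      refine Finset.sum_le_sum fun i _ => ?_
      by_cases hi : i ∈ S'
      · simp only [ind, hi, if_true, one_mul]
        rw [hS'def, Finset.mem_map] at hi
        obtain ⟨j, hj, rfl⟩ := hi
        exact hτ (Finset.mem_Iic.1 hj)
      · simp only [ind, hi, if_false, zero_mul]
        exact hμ _
    refine this.trans ?_
    simp
    nlinarith [hμ (τ k)]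
  have h5 := mul_le_mul_of_nonneg_left h1 (hγ (σ k)).le
  rw [div_mul_eq_mul_div, div_le_iff₀ (by positivity)]
  linarith

lemma psd_det_re {n : ℕ} {X : Matrix (Fin n) (Fin n) ℂ} (hX : X.PosSemidef) :
    X.det = ((X.det.re : ℝ) : ℂ) ∧ 0 ≤ X.det.re := by
  obtain ⟨U, d, h1, h2, rfl, hd⟩ := exists_spec_psd hX
  rw [spec_det h2, Complex.ofReal_re]
  exact ⟨rfl, Finset.prod_nonneg fun i _ => hd i⟩

lemma det_conj_left {n : ℕ} (k X : Matrix (Fin n) (Fin n) ℂ) :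
    (kᴴ * X * k).det.re = Complex.normSq k.det * X.det.re := by
  rw [det_mul, det_mul, det_conjTranspose, mul_right_comm, RCLike.star_def, mul_comm (starRingEnd ℂ _),
    Complex.mul_conj, Complex.re_ofReal_mul]

lemma det_conj_right {n : ℕ} (k X : Matrix (Fin n) (Fin n) ℂ) :
    (k * X * kᴴ).det.re = Complex.normSq k.det * X.det.re := by
  rw [det_mul, det_mul, det_conjTranspose, mul_right_comm, RCLike.star_def, 
    Complex.mul_conj, Complex.re_ofReal_mul]

lemma det_le_one {n : ℕ} {M : Matrix (Fin n) (Fin n) ℂ} (hM : M.PosSemidef)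
    (h : M.trace.re ≤ n) : M.det.re ≤ 1 := by
  obtain ⟨U, p, h1, h2, rfl, hp⟩ := exists_spec_psd hM
  rw [spec_det h2, Complex.ofReal_re]
  rw [spec_trace h2, Complex.ofReal_re] at h
  calc ∏ i, p i ≤ ∏ i, Real.exp (p i - 1) :=
        Finset.prod_le_prod (fun i _ => hp i) fun i _ => by linarith [Real.add_one_le_exp (p i - 1)]
    _ = Real.exp (∑ i, p i - n) := by rw [← Real.exp_sum]; simp
    _ ≤ 1 := Real.exp_le_one_iff.2 (by linarith)

/-- numbers with sum `n` and product close to one are close to one -/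
lemma close_of_prod {n : ℕ} (z : Fin n → ℝ) (hz : ∀ i, 0 ≤ z i) (hsum : ∑ i, z i = n)
    {δ : ℝ} (hδ : 0 < δ) (hprod : 1 ≤ (1 + δ) * ∏ i, z i) :
    ∑ i, (z i - 1) ^ 2 ≤ (√n + 1) ^ 2 * δ := by
  have hne : ∀ i, z i ≠ 0 := by
    intro i hi
    rw [Finset.prod_eq_zero (Finset.mem_univ i) hi] at hprod
    norm_num at hprod
  have hlog : -δ ≤ ∑ i, Real.log (z i) := by
    rw [← Real.log_prod fun i _ => hne i]
    have hp : 0 < ∏ i, z i := Finset.prod_pos fun i _ => lt_of_le_of_ne (hz i) (hne i).symm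
    have h1 := Real.log_nonneg hprod
    rw [Real.log_mul (by positivity) hp.ne'] at h1
    have := Real.log_le_sub_one_of_pos (show 0 < 1 + δ by positivity)
    linarith
  have h1 : ∀ i, (√(z i) - 1) ^ 2 ≤ z i - 1 - Real.log (z i) := by
    intro i
    have hp : 0 < z i := lt_of_le_of_ne (hz i) (hne i).symm
    have := Real.log_le_sub_one_of_pos (Real.sqrt_pos.2 hp)
    rw [Real.log_sqrt hp.le] at this
    nlinarith [Real.sq_sqrt hp.le]
  have h2 : ∀ i, (z i - 1) ^ 2 ≤ (√n + 1) ^ 2 * (√(z i) - 1) ^ 2 := by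
    intro i
    have hle : z i ≤ n := by
      rw [← hsum]
      exact Finset.single_le_sum (fun j _ => hz j) (Finset.mem_univ i)
    have e : (z i - 1) ^ 2 = (√(z i) + 1) ^ 2 * (√(z i) - 1) ^ 2 := by
      rw [← mul_pow]; congr 1
      nlinarith [Real.sq_sqrt (hz i)]
    rw [e]
    gcongr
  calc ∑ i, (z i - 1) ^ 2 ≤ ∑ i, (√n + 1) ^ 2 * (z i - 1 - Real.log (z i)) :=
        Finset.sum_le_sum fun i _ => (h2 i).trans (by gcongr; exact h1 i)
    _ = (√n + 1) ^ 2 * (- ∑ i, Real.log (z i)) := by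
        rw [← Finset.mul_sum, Finset.sum_sub_distrib, Finset.sum_sub_distrib, hsum]
        simp
    _ ≤ _ := by gcongr; linarith

lemma two_core {m n : ℕ} (B : Fin m → Matrix (Fin n) (Fin n) ℂ) (hB : Tcp B 1 = 1)
    {δ : ℝ} (hδ : 0 < δ) (hcap : ∀ Y : Matrix (Fin n) (Fin n) ℂ, Y.PosDef → 
      Y.det.re ≤ (1 + δ) * (Tcp B Y).det.re) :
    frobSq (TcpStar B 1 - 1) ≤ (√n + 1) ^ 2 * δ := by
  obtain ⟨U, z, hU, hU', hZ, hz⟩ := exists_spec_psd (TcpStar_psd B PosSemidef.one)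
  have hsum : ∑ i, z i = n := by
    have := Tcp_trace B 1 1
    rw [hB, hZ, Matrix.mul_one, Matrix.mul_one, spec_trace hU', trace_one, Fintype.card_fin] at this
    exact_mod_cast this.symm
  have hη : ∀ η : ℝ, 0 < η → 1 ≤ (1 + δ) * ∏ i, (z i + η) := by
    intro η hη
    have hpos : ∀ i, 0 < z i + η := fun i => by linarith [hz i]
    have hY := spec_pd hU (d := fun i => (z i + η)⁻¹) fun i => inv_pos.2 (hpos i)
    have h1 := hcap _ hY
    have h2 : (Tcp B (spec U fun i => (z i + η)⁻¹)).det.re ≤ 1 := by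
      apply det_le_one (Tcp_psd B hY.posSemidef)
      have := Tcp_trace B (spec U fun i => (z i + η)⁻¹) 1
      rw [Matrix.one_mul] at this
      rw [this, hZ, spec_mul hU', spec_trace hU', Complex.ofReal_re]
      calc ∑ i, z i * (z i + η)⁻¹ ≤ ∑ _i : Fin n, (1 : ℝ) := by
            refine Finset.sum_le_sum fun i _ => ?_
            rw [← div_eq_mul_inv, div_le_one (hpos i)]
            linarith
        _ = n := by simp
    rw [spec_det hU', Complex.ofReal_re, Finset.prod_inv_distrib] at h1
    have hp : 0 < ∏ i, (z i + η) := Finset.prod_pos fun i _ => hpos i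
    have h3 : (∏ i, (z i + η))⁻¹ ≤ 1 + δ := h1.trans (by nlinarith)
    rwa [inv_le_iff_one_le_mul₀ hp] at h3
  have hprod : 1 ≤ (1 + δ) * ∏ i, z i := by
    have hc : Continuous fun η : ℝ => (1 + δ) * ∏ i, (z i + η) := by fun_prop
    have ht := (hc.tendsto 0).mono_left (nhdsWithin_le_nhds (s := Set.Ioi 0))
    simp only [add_zero] at ht
    exact ge_of_tendsto ht (Filter.eventually_of_mem self_mem_nhdsWithin hη)
  rw [hZ, ← spec_one hU, spec_sub, frobSq_spec hU']
  exact close_of_prod z hz hsum hδ hprod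

lemma two_imp_one {m n : ℕ} (A : Fin m → Matrix (Fin n) (Fin n) ℂ)
    (h2 : 0 < sInf {r : ℝ | ∃ X : Matrix (Fin n) (Fin n) ℂ, X.PosDef ∧
            r = ((Tcp A X).det / X.det).re}) (ε : ℝ) (hε : 0 < ε) : ∃ g h : GL (Fin n) ℂ,
          frobSq (Tcp (fun k => (↑g)ᴴ * A k * (↑h : Matrix (Fin n) (Fin n) ℂ)) 1 - 1)
            + frobSq (TcpStar (fun k => (↑g)ᴴ * A k * (↑h : Matrix (Fin n) (Fin n) ℂ)) 1 - 1)
            < ε ^ 2 := by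
  set R := {r : ℝ | ∃ X : Matrix (Fin n) (Fin n) ℂ, X.PosDef ∧
            r = ((Tcp A X).det / X.det).re} with hR
  have hdiv : ∀ X : Matrix (Fin n) (Fin n) ℂ, X.PosDef → 0 < X.det.re ∧
      ((Tcp A X).det / X.det).re = (Tcp A X).det.re / X.det.re := by
    intro X hX
    have e1 := psd_det_re hX.posSemidef
    have e2 := psd_det_re (Tcp_psd A hX.posSemidef)
    refine ⟨(Complex.lt_def.1 hX.det_pos).1, ?_⟩
    rw [e1.1, e2.1, ← Complex.ofReal_div]
    simp only [Complex.ofReal_re]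
  have hbdd : BddBelow R := by
    refine ⟨0, ?_⟩
    rintro r ⟨X, hX, rfl⟩
    rw [(hdiv X hX).2]
    exact div_nonneg (psd_det_re (Tcp_psd A hX.posSemidef)).2 (hdiv X hX).1.le
  have hlow : ∀ X : Matrix (Fin n) (Fin n) ℂ, X.PosDef → 
      sInf R * X.det.re ≤ (Tcp A X).det.re := by
    intro X hX
    have := csInf_le hbdd ⟨X, hX, rfl⟩
    rwa [(hdiv X hX).2, le_div_iff₀ (hdiv X hX).1] at this
  set c := sInf R with hc
  set δ : ℝ := ε ^ 2 / (2 * (√n + 1) ^ 2) with hδdef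
  have hδ : 0 < δ := by positivity
  obtain ⟨r, ⟨X, hX, rfl⟩, hr⟩ := exists_lt_of_csInf_lt (s := R) ⟨_, 1, PosDef.one, rfl⟩ 
    (show sInf R < c * (1 + δ) by rw [← hc]; nlinarith)
  rw [(hdiv X hX).2, div_lt_iff₀ (hdiv X hX).1] at hr
  have hM := Tcp_psd A hX.posSemidef
  have hMdet : 0 < (Tcp A X).det.re := lt_of_lt_of_le (mul_pos h2 (hdiv X hX).1) (hlow X hX)
  obtain ⟨h, hh⟩ := psd_factor hX.posSemidef
  obtain ⟨l, hl⟩ := psd_factor hM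
  have dX : X.det.re = Complex.normSq h.det := by
    have := det_conj_right h 1
    rw [Matrix.mul_one, ← hh] at this
    simpa using this
  have dM : (Tcp A X).det.re = Complex.normSq l.det := by
    have := det_conj_right l 1
    rw [Matrix.mul_one, ← hl] at this
    simpa using this
  have hh0 : h.det ≠ 0 := by
    rw [← Complex.normSq_pos, ← dX]; exact (hdiv X hX).1
  have hl0 : l.det ≠ 0 := by
    rw [← Complex.normSq_pos, ← dM]; exact hMdet
  have hlu : IsUnit l.det := isUnit_iff_ne_zero.2 hl0
  set g : Matrix (Fin n) (Fin n) ℂ := (l⁻¹)ᴴ with hg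
  have hg0 : g.det ≠ 0 := by
    rw [hg, det_conjTranspose]
    exact star_ne_zero.2 ((isUnit_nonsing_inv_det _ hlu).ne_zero)
  have hgM : gᴴ * Tcp A X * g = 1 := by
    rw [hl, hg, conjTranspose_conjTranspose, ← Matrix.mul_assoc, nonsing_inv_mul _ hlu,
      Matrix.one_mul, ← conjTranspose_mul, nonsing_inv_mul _ hlu, conjTranspose_one]
  refine ⟨GeneralLinearGroup.mkOfDetNeZero g hg0, GeneralLinearGroup.mkOfDetNeZero h hh0, ?_⟩
  change frobSq (Tcp (fun k => gᴴ * A k * h) 1 - 1) 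
    + frobSq (TcpStar (fun k => gᴴ * A k * h) 1 - 1) < ε ^ 2
  have hB : Tcp (fun k => gᴴ * A k * h) 1 = 1 := by
    rw [Tcp_conj, Matrix.mul_one, ← hh, hgM]
  have hGM : Complex.normSq g.det * (Tcp A X).det.re = 1 := by
    rw [← det_conj_left, hgM]; simp
  have hG := Complex.normSq_pos.2 hg0
  have key := two_core _ hB hδ (by
    intro Y hY
    rw [Tcp_conj, det_conj_left]
    have hY' : (h * Y * hᴴ).PosDef := by
      apply hY.mul_mul_conjTranspose_same
      intro x y hxy
      have := congrArg (fun z => z ᵥ* h⁻¹) hxy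
      simpa [vecMul_vecMul, mul_nonsing_inv _ (isUnit_iff_ne_zero.2 hh0)] using this
    have k1 := hlow _ hY'
    rw [det_conj_right, ← dX] at k1
    have hy := (hdiv Y hY).1
    have k2 := mul_lt_mul_of_pos_left hr hG
    rw [hGM] at k2
    have k3 := mul_le_mul_of_nonneg_left k1 hG.le
    nlinarith [mul_lt_mul_of_pos_right k2 hy, mul_le_mul_of_nonneg_left k3 (show 0 ≤ 1 + δ by linarith)])
  have e0 : frobSq (Tcp (fun k => gᴴ * A k * h) 1 - 1) = 0 := by
    rw [hB]; simp [frobSq]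
  have e1 : (√n + 1) ^ 2 * δ = ε ^ 2 / 2 := by
    rw [hδdef]; field_simp
  rw [e0]
  nlinarith [sq_pos_of_pos hε]

/-- Gurvits' characterization of scalability: (1) `𝒜` is approximately doubly-stochastic
scalable; (2) the capacity-type infimum is positive; (3) `rank T_𝒜(X) ≥ rank X` for all
positive semidefinite `X`. -/
theorem gurvits_scalability_tfae {m n : ℕ} (A : Fin m → Matrix (Fin n) (Fin n) ℂ) :
    List.TFAE
      [ (∀ ε > (0 : ℝ), ∃ g h : GL (Fin n) ℂ,
          frobSq (Tcp (fun k => (↑g)ᴴ * A k * (↑h : Matrix (Fin n) (Fin n) ℂ)) 1 - 1)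
            + frobSq (TcpStar (fun k => (↑g)ᴴ * A k * (↑h : Matrix (Fin n) (Fin n) ℂ)) 1 - 1)
            < ε ^ 2),
        (0 < sInf {r : ℝ | ∃ X : Matrix (Fin n) (Fin n) ℂ, X.PosDef ∧
            r = ((Tcp A X).det / X.det).re}),
        (∀ X : Matrix (Fin n) (Fin n) ℂ, X.PosSemidef → X.rank ≤ (Tcp A X).rank) ] := by
  tfae_have 1 → 3 := one_imp_three A
  tfae_have 3 → 2 := three_imp_two A
  tfae_have 2 → 1 := two_imp_one A
  tfae_finish
end
end

section
/- Let v be a norm on ℝ^n that is invariant under coordinate permutations. Then the function H ↦ ‖H‖_v := v(λ(H)), where λ(H) ∈ ℝ^n is the vector of eigenvalues of the Hermitian matrix H, is a norm on the real vector space of n×n Hermitian matrices; in particular it satisfies the triangle inequality ‖H + K‖_v ≤ ‖H‖_v + ‖K‖_v for all Hermitian H, K. -/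
noncomputable section
open scoped Classical
open Matrix

lemma aux_sum {n : ℕ} (v : (Fin n → ℝ) → ℝ)
    (hv_zero : v 0 = 0)
    (hv_add : ∀ x y, v (x + y) ≤ v x + v y) {ι : Type*} (s : Finset ι) (f : ι → Fin n → ℝ) :
    v (∑ i ∈ s, f i) ≤ ∑ i ∈ s, v (f i) := by
  induction s using Finset.induction_on with
  | empty => simp [hv_zero]
  | insert a s ha ih =>
    rw [Finset.sum_insert ha, Finset.sum_insert ha]
    linarith [hv_add (f a) (∑ i ∈ s, f i)]

lemma aux_ds {n : ℕ} (v : (Fin n → ℝ) → ℝ)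
    (hv_zero : v 0 = 0)
    (hv_smul : ∀ (c : ℝ) (x : Fin n → ℝ), v (c • x) = |c| * v x)
    (hv_add : ∀ x y, v (x + y) ≤ v x + v y)
    (hv_perm : ∀ (σ : Equiv.Perm (Fin n)) (x : Fin n → ℝ), v (x ∘ σ) = v x)
    (M : Matrix (Fin n) (Fin n) ℝ) (hM : M ∈ doublyStochastic ℝ (Fin n)) (x : Fin n → ℝ) :
    v (M *ᵥ x) ≤ v x := by
  obtain ⟨w, hw0, hw1, hw⟩ := exists_eq_sum_perm_of_mem_doublyStochastic hM
  have : M *ᵥ x = ∑ σ, w σ • (x ∘ σ) := by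
    rw [← hw, Matrix.sum_mulVec]
    refine Finset.sum_congr rfl fun σ _ => ?_
    rw [Matrix.smul_mulVec, Matrix.permMatrix_mulVec]
  rw [this]
  refine (aux_sum v hv_zero hv_add _ _).trans (le_of_eq ?_)
  simp only [hv_smul, hv_perm, abs_of_nonneg (hw0 _)]
  rw [← Finset.sum_mul, hw1, one_mul]

lemma aux_unitary {n : ℕ} (V : Matrix (Fin n) (Fin n) ℂ) (h1 : V * star V = 1)
    (h2 : star V * V = 1) :
    (Matrix.of fun i j => Complex.normSq (V i j)) ∈ doublyStochastic ℝ (Fin n) := by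
  rw [mem_doublyStochastic_iff_sum]
  refine ⟨fun i j => Complex.normSq_nonneg _, fun i => ?_, fun j => ?_⟩
  · have := congrFun (congrFun h1 i) i
    simp only [Matrix.mul_apply, Matrix.star_apply, Matrix.one_apply_eq, Complex.star_def,
      Complex.mul_conj] at this
    simp only [Matrix.of_apply]
    exact_mod_cast this
  · have := congrFun (congrFun h2 j) j
    simp only [Matrix.mul_apply, Matrix.star_apply, Matrix.one_apply_eq, Complex.star_def,
      ← Complex.normSq_eq_conj_mul_self] at this
    simp only [Matrix.of_apply]
    exact_mod_cast this

/-- real diagonal of `W* H W` -/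
def auxDiag {n : ℕ} (W H : Matrix (Fin n) (Fin n) ℂ) : Fin n → ℝ :=
  fun i => ((star W * H * W) i i).re

lemma auxDiag_add {n : ℕ} (W H K : Matrix (Fin n) (Fin n) ℂ) :
    auxDiag W (H + K) = auxDiag W H + auxDiag W K := by
  ext i
  simp [auxDiag, Matrix.mul_add, Matrix.add_mul]

lemma auxDiag_smul {n : ℕ} (W H : Matrix (Fin n) (Fin n) ℂ) (c : ℝ) :
    auxDiag W (c • H) = c • auxDiag W H := by
  ext i
  simp [auxDiag]

lemma aux_conj {n : ℕ} (V : Matrix (Fin n) (Fin n) ℂ) (d : Fin n → ℝ) (i : Fin n) :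
    ((V * diagonal (fun j => (d j : ℂ)) * star V) i i).re
      = ((Matrix.of fun i j => Complex.normSq (V i j)) *ᵥ d) i := by
  rw [Matrix.mul_apply]
  simp only [Matrix.mulVec, dotProduct, Matrix.mul_diagonal, Matrix.star_apply,
    Complex.re_sum, Matrix.of_apply]
  refine Finset.sum_congr rfl fun j _ => ?_
  simp [Complex.normSq_apply]
  ring

lemma aux_spec {n : ℕ} {H : Matrix (Fin n) (Fin n) ℂ} (hH : H.IsHermitian) :
    H = (hH.eigenvectorUnitary : Matrix (Fin n) (Fin n) ℂ)
      * diagonal (fun j => (hH.eigenvalues j : ℂ))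
      * star (hH.eigenvectorUnitary : Matrix (Fin n) (Fin n) ℂ) := by
  conv_lhs => rw [hH.spectral_theorem, Unitary.conjStarAlgAut_apply]
  rfl

lemma auxDiag_eig {n : ℕ} {H : Matrix (Fin n) (Fin n) ℂ} (hH : H.IsHermitian) :
    auxDiag (hH.eigenvectorUnitary : Matrix (Fin n) (Fin n) ℂ) H = hH.eigenvalues := by
  ext i
  have hs := aux_spec hH
  have hU : star (hH.eigenvectorUnitary : Matrix (Fin n) (Fin n) ℂ) *
    (hH.eigenvectorUnitary : Matrix (Fin n) (Fin n) ℂ) = 1 := Unitary.coe_star_mul_self _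
  unfold auxDiag
  have : star (hH.eigenvectorUnitary : Matrix (Fin n) (Fin n) ℂ) * H *
      (hH.eigenvectorUnitary : Matrix (Fin n) (Fin n) ℂ)
      = diagonal (fun j => (hH.eigenvalues j : ℂ)) := by
    generalize (hH.eigenvectorUnitary : Matrix (Fin n) (Fin n) ℂ) = U at *
    generalize diagonal (fun j => (hH.eigenvalues j : ℂ)) = D at *
    calc star U * H * U = star U * (U * D * star U) * U := by rw [← hs]
      _ = (star U * U) * D * (star U * U) := by simp only [Matrix.mul_assoc]
      _ = D := by rw [hU]; simp
  rw [this]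
  simp

lemma aux_schur {n : ℕ} (v : (Fin n → ℝ) → ℝ)
    (hv_zero : v 0 = 0)
    (hv_smul : ∀ (c : ℝ) (x : Fin n → ℝ), v (c • x) = |c| * v x)
    (hv_add : ∀ x y, v (x + y) ≤ v x + v y)
    (hv_perm : ∀ (σ : Equiv.Perm (Fin n)) (x : Fin n → ℝ), v (x ∘ σ) = v x)
    {H : Matrix (Fin n) (Fin n) ℂ} (hH : H.IsHermitian)
    (W : Matrix.unitaryGroup (Fin n) ℂ) :
    v (auxDiag (W : Matrix (Fin n) (Fin n) ℂ) H) ≤ v hH.eigenvalues := by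
  set V : Matrix.unitaryGroup (Fin n) ℂ := star W * hH.eigenvectorUnitary with hV
  have key : auxDiag (W : Matrix (Fin n) (Fin n) ℂ) H
      = (Matrix.of fun i j => Complex.normSq ((V : Matrix (Fin n) (Fin n) ℂ) i j))
        *ᵥ hH.eigenvalues := by
    ext i
    rw [← aux_conj, auxDiag]
    have : star (W : Matrix (Fin n) (Fin n) ℂ) * H * (W : Matrix (Fin n) (Fin n) ℂ)
        = (V : Matrix (Fin n) (Fin n) ℂ) * diagonal (fun j => (hH.eigenvalues j : ℂ))
          * star (V : Matrix (Fin n) (Fin n) ℂ) := by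
      conv_lhs => rw [aux_spec hH]
      simp [hV, Matrix.mul_assoc]
    rw [this]
  rw [key]
  exact aux_ds v hv_zero hv_smul hv_add hv_perm _
    (aux_unitary _ (Unitary.coe_mul_star_self V) (Unitary.coe_star_mul_self V)) _

open scoped Classical
open Matrix

/-- Given a permutation-invariant norm `v` on `ℝⁿ`, the map `H ↦ v(λ(H))` on Hermitian
matrices is a norm: it is definite, absolutely homogeneous, and satisfies the triangle
inequality. -/
theorem hermitian_vnorm_is_norm {n : ℕ} (v : (Fin n → ℝ) → ℝ)
    (hv_eq0 : ∀ x, v x = 0 ↔ x = 0)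
    (hv_smul : ∀ (c : ℝ) (x : Fin n → ℝ), v (c • x) = |c| * v x)
    (hv_add : ∀ x y, v (x + y) ≤ v x + v y)
    (hv_perm : ∀ (σ : Equiv.Perm (Fin n)) (x : Fin n → ℝ), v (x ∘ σ) = v x) :
    (∀ (H : Matrix (Fin n) (Fin n) ℂ) (hH : H.IsHermitian),
        (v hH.eigenvalues = 0 ↔ H = 0))
      ∧ (∀ (H : Matrix (Fin n) (Fin n) ℂ) (hH : H.IsHermitian) (c : ℝ)
          (hcH : (c • H).IsHermitian),
          v hcH.eigenvalues = |c| * v hH.eigenvalues)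
      ∧ (∀ (H K : Matrix (Fin n) (Fin n) ℂ) (hH : H.IsHermitian) (hK : K.IsHermitian)
          (hHK : (H + K).IsHermitian),
          v hHK.eigenvalues ≤ v hH.eigenvalues + v hK.eigenvalues) := by
  have h0 : v 0 = 0 := (hv_eq0 0).2 rfl
  have S := fun {H : Matrix (Fin n) (Fin n) ℂ} (hH : H.IsHermitian) W =>
    aux_schur v h0 hv_smul hv_add hv_perm hH W
  have le : ∀ (H : Matrix (Fin n) (Fin n) ℂ) (hH : H.IsHermitian) (c : ℝ)
      (hcH : (c • H).IsHermitian), v hcH.eigenvalues ≤ |c| * v hH.eigenvalues := by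
    intro H hH c hcH
    rw [← auxDiag_eig hcH, auxDiag_smul, hv_smul]
    exact mul_le_mul_of_nonneg_left (S hH _) (abs_nonneg c)
  refine ⟨fun H hH => ?_, fun H hH c hcH => ?_, fun H K hH hK hHK => ?_⟩
  · rw [hv_eq0]
    exact hH.eigenvalues_eq_zero_iff
  · rcases eq_or_ne c 0 with rfl | hc
    · have : hcH.eigenvalues = 0 := hcH.eigenvalues_eq_zero_iff.2 (zero_smul ℝ H)
      rw [this, h0]
      simp
    · refine le_antisymm (le H hH c hcH) ?_
      have e : c⁻¹ • (c • H) = H := inv_smul_smul₀ hc H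
      have h1 : ∀ (G : Matrix (Fin n) (Fin n) ℂ) (hG : G.IsHermitian), c⁻¹ • (c • H) = G →
          v hG.eigenvalues ≤ |c⁻¹| * v hcH.eigenvalues := by
        rintro G hG rfl
        exact le _ hcH _ hG
      have h2 := mul_le_mul_of_nonneg_left (h1 H hH e) (abs_nonneg c)
      rwa [← mul_assoc, ← abs_mul, mul_inv_cancel₀ hc, abs_one, one_mul] at h2
  · rw [← auxDiag_eig hHK, auxDiag_add]
    exact (hv_add _ _).trans (add_le_add (S hH _) (S hK _))
end
end

section
/- Let v be a norm on ℝ^n invariant under coordinate permutations. For every Hermitian n×n matrix H, ‖H‖_v ≥ v(D(H)), where D(H) ∈ ℝ^n is the vector of diagonal entries of H (which are real). -/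
noncomputable section
open scoped Classical
open Matrix

/-- For a permutation-invariant norm `v` and Hermitian `H`, `‖H‖_v ≥ v(D(H))`,
where `D(H)` is the (real) vector of diagonal entries of `H`. -/
theorem vnorm_ge_diag {n : ℕ} (v : (Fin n → ℝ) → ℝ)
    (hv_eq0 : ∀ x, v x = 0 ↔ x = 0)
    (hv_smul : ∀ (c : ℝ) (x : Fin n → ℝ), v (c • x) = |c| * v x)
    (hv_add : ∀ x y, v (x + y) ≤ v x + v y)
    (hv_perm : ∀ (σ : Equiv.Perm (Fin n)) (x : Fin n → ℝ), v (x ∘ σ) = v x)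
    (H : Matrix (Fin n) (Fin n) ℂ) (hH : H.IsHermitian) :
    v (fun i => (H i i).re) ≤ v hH.eigenvalues := by
  let U : Matrix (Fin n) (Fin n) ℂ := hH.eigenvectorUnitary
  have hU1 : U * star U = 1 := Unitary.coe_mul_star_self hH.eigenvectorUnitary
  have hU2 : star U * U = 1 := Unitary.coe_star_mul_self hH.eigenvectorUnitary
  have hspec : H = U * diagonal (RCLike.ofReal ∘ hH.eigenvalues) * star U := by
    have := hH.spectral_theorem
    rwa [Unitary.conjStarAlgAut_apply] at this
  let M : Matrix (Fin n) (Fin n) ℝ := fun i j => Complex.normSq (U i j)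
  have hM : M ∈ doublyStochastic ℝ (Fin n) := by
    rw [mem_doublyStochastic_iff_sum]
    refine ⟨fun i j => Complex.normSq_nonneg _, fun i => ?_, fun j => ?_⟩
    · have h := congrFun (congrFun hU1 i) i
      simp only [mul_apply, star_apply, one_apply_eq] at h
      have h2 := congrArg Complex.re h
      simpa [M, Complex.normSq_apply] using h2
    · have h := congrFun (congrFun hU2 j) j
      simp only [mul_apply, star_apply, one_apply_eq] at h
      have h2 := congrArg Complex.re h
      simpa [M, Complex.normSq_apply] using h2
  have hdiag : (fun i => (H i i).re) = M *ᵥ hH.eigenvalues := by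
    funext i
    have h := congrArg Complex.re (congrFun (congrFun hspec i) i)
    rw [h, mul_apply, Complex.re_sum]
    simp only [mulVec, dotProduct]
    refine Finset.sum_congr rfl fun j _ => ?_
    simp [M, Complex.normSq_apply, mul_diagonal, star_apply]
    ring
  obtain ⟨w, hw0, hw1, hw2⟩ := exists_eq_sum_perm_of_mem_doublyStochastic hM
  have hsum : ∀ (s : Finset (Equiv.Perm (Fin n))) (f : Equiv.Perm (Fin n) → Fin n → ℝ),
      v (∑ σ ∈ s, f σ) ≤ ∑ σ ∈ s, v (f σ) := by
    intro s f
    exact Finset.le_sum_of_subadditive v ((hv_eq0 0).2 rfl).le hv_add s f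
  rw [hdiag, ← hw2, Matrix.sum_mulVec]
  refine (hsum _ _).trans ?_
  have : ∀ σ : Equiv.Perm (Fin n),
      v ((w σ • σ.permMatrix ℝ) *ᵥ hH.eigenvalues) = w σ * v hH.eigenvalues := by
    intro σ
    rw [smul_mulVec, hv_smul, abs_of_nonneg (hw0 σ), permMatrix_mulVec, hv_perm]
  simp only [this]
  rw [← Finset.sum_mul, hw1, one_mul]
end
end

section
/- Let n' ≤ n, let B_1,…,B_m be n'×n' complex matrices, and let A_k be the n×n block matrix with B_k in the upper-left n'×n' corner and zeros elsewhere, for k = 1,…,m. Write 𝒜 = (A_1,…,A_m) and ℬ = (B_1,…,B_m). Then min over all complex linear subspaces U ≤ ℂ^n of (dim 𝒜U − dim U) equals −(n − n') + min over all complex linear subspaces V ≤ ℂ^{n'} of (dim ℬV − dim V). -/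
noncomputable section
open scoped Classical
open Matrix
open scoped ComplexOrder

/-- `𝒜U = ∑ k, A_k U`. -/
def ASpan {m : ℕ} {ι : Type*} [Fintype ι] [DecidableEq ι]
    (A : Fin m → Matrix ι ι ℂ) (U : Submodule ℂ (ι → ℂ)) : Submodule ℂ (ι → ℂ) :=
  ⨆ k, U.map (A k).mulVecLin

theorem block_aspan {m n' r : ℕ}
    (B : Fin m → Matrix (Fin n') (Fin n') ℂ) (U : Submodule ℂ ((Fin n' ⊕ Fin r) → ℂ)) :
    Module.finrank ℂ (ASpan (fun k => Matrix.fromBlocks (B k) 0 0 0) U)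
      = Module.finrank ℂ (ASpan B (U.map (LinearMap.funLeft ℂ ℂ (Sum.inl : Fin n' → Fin n' ⊕ Fin r)))) := by
  let e : (Fin n' → ℂ) →ₗ[ℂ] (Fin n' ⊕ Fin r → ℂ) :=
    { toFun := fun v => Sum.elim v 0
      map_add' := by intro a b; ext i; cases i <;> simp
      map_smul' := by intro a b; ext i; cases i <;> simp }
  have he : Function.Injective e := by
    intro a b h
    ext i
    exact congrFun h (Sum.inl i)
  have hA : ASpan (fun k => Matrix.fromBlocks (B k) 0 0 0) U
      = (ASpan B (U.map (LinearMap.funLeft ℂ ℂ (Sum.inl : Fin n' → Fin n' ⊕ Fin r)))).map e := by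
    unfold ASpan
    rw [Submodule.map_iSup]
    refine iSup_congr fun k => ?_
    rw [← Submodule.map_comp, ← Submodule.map_comp]
    congr 1
    refine LinearMap.ext fun v => ?_
    show Matrix.fromBlocks (B k) 0 0 0 *ᵥ v = Sum.elim (B k *ᵥ (v ∘ Sum.inl)) 0
    rw [Matrix.fromBlocks_mulVec]
    simp
  rw [hA]
  exact (Submodule.equivMapOfInjective e he _).finrank_eq.symm

theorem rank_split {n' r : ℕ} (U : Submodule ℂ ((Fin n' ⊕ Fin r) → ℂ)) :
    Module.finrank ℂ (U.map (LinearMap.funLeft ℂ ℂ (Sum.inl : Fin n' → Fin n' ⊕ Fin r)))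
      + Module.finrank ℂ (U ⊓ LinearMap.ker (LinearMap.funLeft ℂ ℂ (Sum.inl : Fin n' → Fin n' ⊕ Fin r)) : Submodule ℂ _)
      = Module.finrank ℂ U := by
  set p := LinearMap.funLeft ℂ ℂ (Sum.inl : Fin n' → Fin n' ⊕ Fin r)
  rw [← LinearMap.finrank_range_add_finrank_ker (p.domRestrict U), LinearMap.range_domRestrict,
    LinearMap.ker_domRestrict, ← Submodule.map_comap_subtype,
    Submodule.finrank_map_subtype_eq]

theorem p_surj {n' r : ℕ} :
    Function.Surjective (LinearMap.funLeft ℂ ℂ (Sum.inl : Fin n' → Fin n' ⊕ Fin r)) :=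
  LinearMap.funLeft_surjective_of_injective _ _ _ Sum.inl_injective

theorem rank_ker {n' r : ℕ} :
    Module.finrank ℂ (LinearMap.ker (LinearMap.funLeft ℂ ℂ (Sum.inl : Fin n' → Fin n' ⊕ Fin r))) = r := by
  have h := LinearMap.finrank_range_add_finrank_ker
    (LinearMap.funLeft ℂ ℂ (Sum.inl : Fin n' → Fin n' ⊕ Fin r))
  rw [LinearMap.range_eq_top.2 p_surj] at h
  simp at h
  exact h

theorem bdd_aux {m : ℕ} {ι : Type*} [Fintype ι] [DecidableEq ι]
    (A : Fin m → Matrix ι ι ℂ) :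
    BddBelow {d : ℝ | ∃ V : Submodule ℂ (ι → ℂ),
          d = (Module.finrank ℂ (ASpan A V) : ℝ) - (Module.finrank ℂ V : ℝ)} := by
  refine ⟨-(Fintype.card ι : ℝ), ?_⟩
  rintro d ⟨V, rfl⟩
  have h : Module.finrank ℂ V ≤ Fintype.card ι := by
    simpa using Submodule.finrank_le V
  have h' : (Module.finrank ℂ V : ℝ) ≤ Fintype.card ι := by exact_mod_cast h
  have : (0:ℝ) ≤ Module.finrank ℂ (ASpan A V) := Nat.cast_nonneg _
  linarith

/-- For the tuple `𝒜` of `n × n` block matrices with `B_k` in the upper-left `n' × n'`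
corner and zeros elsewhere (`n = n' + r`), `min_U (dim 𝒜U - dim U)` equals
`-(n - n') + min_V (dim ℬV - dim V)`. -/
theorem block_min_dim_formula {m n' r : ℕ}
    (B : Fin m → Matrix (Fin n') (Fin n') ℂ) :
    sInf {d : ℝ | ∃ U : Submodule ℂ ((Fin n' ⊕ Fin r) → ℂ),
        d = (Module.finrank ℂ
              (ASpan (fun k => Matrix.fromBlocks (B k) 0 0 0) U) : ℝ)
            - (Module.finrank ℂ U : ℝ)}
      = -(r : ℝ) + sInf {d : ℝ | ∃ V : Submodule ℂ (Fin n' → ℂ),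
          d = (Module.finrank ℂ (ASpan B V) : ℝ) - (Module.finrank ℂ V : ℝ)} := by
  apply le_antisymm
  · rw [← sub_le_iff_le_add']
    refine le_csInf ⟨_, ⊥, rfl⟩ ?_
    rintro d ⟨V, rfl⟩
    rw [sub_le_iff_le_add']
    refine csInf_le (bdd_aux _) ⟨V.comap (LinearMap.funLeft ℂ ℂ Sum.inl), ?_⟩
    have h := rank_split (r := r) (V.comap (LinearMap.funLeft ℂ ℂ Sum.inl))
    rw [inf_eq_right.2 (LinearMap.ker_le_comap _), rank_ker,
      Submodule.map_comap_eq_of_surjective p_surj] at h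
    rw [block_aspan, Submodule.map_comap_eq_of_surjective p_surj, ← h]
    push_cast
    ring
  · refine le_csInf ⟨_, ⊥, rfl⟩ ?_
    rintro d ⟨U, rfl⟩
    have h1 := csInf_le (bdd_aux B) ⟨U.map (LinearMap.funLeft ℂ ℂ Sum.inl), rfl⟩
    have h := rank_split U
    have h2 := Submodule.finrank_mono (inf_le_right (a := U)
      (b := LinearMap.ker (LinearMap.funLeft ℂ ℂ (Sum.inl : Fin n' → Fin n' ⊕ Fin r))))
    rw [rank_ker] at h2
    rw [block_aspan]
    have h3 : (Module.finrank ℂ U : ℝ) ≤ Module.finrank ℂ (U.map (LinearMap.funLeft ℂ ℂ (Sum.inl : Fin n' → Fin n' ⊕ Fin r))) + r := by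
      exact_mod_cast (by omega)
    linarith
end
end
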